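/- For generic tuples ξ̄ (length l), ū (length n), v̄ (length m): Σ_{ξ̄ ⇒ {ξ̄_I, ξ̄_II}} K^{(1)}_{n,#ξ̄_I}(ū | ξ̄_I + c)·K^{(1)}_{m,#ξ̄_II}(v̄ | ξ̄_II + c)·f(ξ̄_II, ξ̄_I)/f(ξ̄_II, ū) = K^{(1)}_{n+m,l}({ū, v̄} | ξ̄ + c), and Σ_{ξ̄ ⇒ {ξ̄_I, ξ̄_II}} \bar{K}^{(1)}_{n,#ξ̄_I}(ū | ξ̄_I − c)·\bar{K}^{(1)}_{m,#ξ̄_II}(v̄ | ξ̄_II − c)·f(ξ̄_I, ξ̄_II)/f(ū, ξ̄_II) = \bar{K}^{(1)}_{n+m,l}({ū, v̄} | ξ̄ − c), where the sums run over all partitions of ξ̄ into two disjoint subtuples and {ū, v̄} denotes the concatenated (n+m)-tuple. -/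

import Mathlib

open scoped BigOperators

noncomputable section

/-- The rational function `g(u,v) = c/(u-v)`. -/
def gC (c u v : ℂ) : ℂ := c / (u - v)

/-- The rational function `f(u,v) = (u-v+c)/(u-v)`. -/
def fC (c u v : ℂ) : ℂ := (u - v + c) / (u - v)

/-- The rational function `h(u,v) = (u-v+c)/c`. -/
def hC (c u v : ℂ) : ℂ := (u - v + c) / c

/-- A family of parameters is generic if all pairwise differences avoid `0, ±c, ±2c`. -/
def Generic (c : ℂ) {ι : Type*} (w : ι → ℂ) : Prop :=
  ∀ i j, i ≠ j → w i - w j ≠ 0 ∧ w i - w j ≠ c ∧ w i - w j ≠ -c ∧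
    w i - w j ≠ 2 * c ∧ w i - w j ≠ -2 * c

/-- The modified Izergin determinant `K^{(z)}(x̄|ȳ)`. -/
def KIz (c z : ℂ) {ι κ : Type*} [Fintype ι] [Fintype κ] [DecidableEq κ]
    (x : ι → ℂ) (y : κ → ℂ) : ℂ :=
  Matrix.det (Matrix.of fun j k : κ =>
    -z * (if j = k then 1 else 0) +
      (∏ i, fC c (x i) (y j)) * (∏ i ∈ Finset.univ.erase j, fC c (y j) (y i))
        / hC c (y j) (y k))

/-- The conjugated modified Izergin determinant: `c` is replaced by `-c`. -/
def KIzBar (c z : ℂ) {ι κ : Type*} [Fintype ι] [Fintype κ] [DecidableEq κ]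
    (x : ι → ℂ) (y : κ → ℂ) : ℂ :=
  KIz (-c) z x y

/-- Restriction of a tuple to a subtuple indexed by a `Finset`. -/
def restr {p : ℕ} (w : Fin p → ℂ) (s : Finset (Fin p)) : {x // x ∈ s} → ℂ :=
  fun i => w i.1

/-- Double product `f(w̄_s, w̄_t)` over two subtuples of a tuple. -/
def fSS (c : ℂ) {p : ℕ} (w : Fin p → ℂ) (s t : Finset (Fin p)) : ℂ :=
  ∏ i ∈ s, ∏ j ∈ t, fC c (w i) (w j)

/-!
Weight a splitting `s = t ⊔ r` of a finite index set by `∏ i ∈ t, ∏ j ∈ r, f(yᵢ, yⱼ)`. The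
resulting convolution `⋆` of functions on finite sets is associative, and pointwise multiplication
by a multiplicative function `E a : s ↦ ∏ j ∈ s, a j` distributes over it. Expanding the determinant
into principal minors, which are Cauchy determinants, gives `K^{(z)}(x̄ | ȳ) = E a ⋆ E (-z)` with
`a j = f(x̄, yⱼ)`. For empty `x̄`, nonempty `ȳ` and `z = 1` the columns of the matrix sum to
zero, so `E 1 ⋆ E (-1)` is the unit of `⋆`. Now let `ȳ = ξ̄ + c`. Since
`1 / f(ξ, u) = f(u, ξ + c)`, the sum over partitions is `(E a * (E b ⋆ E (-1))) ⋆ (E a ⋆ E (-z))`,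
where `a` and `b` come from `ū` and `v̄`. This equals `E (a * b) ⋆ (E (-a) ⋆ E a) ⋆ E (-z)`,
whose middle factor `E (-a) * (E 1 ⋆ E (-1))` is again the unit.
-/

section TwistedConvolution

variable {R κ : Type*}

/-- The multiplicative function `E a : s ↦ ∏ j ∈ s, a j` on finite subsets of `κ`. Its values are
the one-index products in the minor expansion of an Izergin determinant. -/
def prodFn [CommMonoid R] (a : κ → R) (s : Finset κ) : R := ∏ j ∈ s, a j

lemma prodFn_mul [CommMonoid R] (a b : κ → R) : prodFn (a * b) = prodFn a * prodFn b :=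
  funext fun _ => Finset.prod_mul_distrib

variable [DecidableEq κ]

/-- The convolution `⋆` of functions on finite subsets of `κ` in which the splitting of `s` into `t`
and `s \ t` carries the weight `∏ i ∈ t, ∏ j ∈ s \ t, w i j`. Sums over partitions of a tuple are
values of such convolutions. -/
def twistedConv [CommSemiring R] (w : κ → κ → R) (F G : Finset κ → R) (s : Finset κ) : R :=
  ∑ t ∈ s.powerset, (∏ i ∈ t, ∏ j ∈ s \ t, w i j) * F t * G (s \ t)

section CommSemiring

variable [CommSemiring R] (w : κ → κ → R)

local infixl:70 " ⋆ " => twistedConv w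

lemma prodFn_mul_twistedConv (a : κ → R) (F G : Finset κ → R) :
    prodFn a * (F ⋆ G) = (prodFn a * F) ⋆ (prodFn a * G) := by
  ext s
  simp only [twistedConv, Pi.mul_apply, Finset.mul_sum]
  refine Finset.sum_congr rfl fun t ht => ?_
  have hsplit : prodFn a s = prodFn a (s \ t) * prodFn a t :=
    (Finset.prod_sdiff (Finset.mem_powerset.1 ht)).symm
  rw [hsplit]
  ring

lemma prodFn_mul_single_empty (a : κ → R) : prodFn a * Pi.single ∅ 1 = Pi.single ∅ 1 := by
  ext s
  rcases eq_or_ne s ∅ with rfl | hs <;> simp [prodFn, *]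

lemma single_empty_twistedConv (F : Finset κ → R) : Pi.single ∅ 1 ⋆ F = F := by
  ext s
  rw [twistedConv, Finset.sum_eq_single_of_mem ∅ (Finset.empty_mem_powerset s)]
  · simp
  · intro t _ ht
    simp [ht]

lemma twistedConv_assoc (F G H : Finset κ → R) : F ⋆ G ⋆ H = F ⋆ (G ⋆ H) := by
  ext s
  simp only [twistedConv, Finset.mul_sum, Finset.sum_mul, Finset.sum_sigma']
  refine Finset.sum_bij' (fun p _ => ⟨p.2, p.1 \ p.2⟩) (fun p _ => ⟨p.1 ∪ p.2, p.1⟩) ?_ ?_ ?_ ?_ ?_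
  · grind
  · grind
  · rintro ⟨q, t⟩ h
    simp only [Finset.mem_sigma, Finset.mem_powerset] at h
    simp [Finset.union_sdiff_of_subset h.2]
  · rintro ⟨t, r⟩ h
    simp only [Finset.mem_sigma, Finset.mem_powerset] at h
    simp [Finset.union_sdiff_cancel_left (Finset.disjoint_sdiff.mono_right h.2)]
  · rintro ⟨q, t⟩ h
    simp only [Finset.mem_sigma, Finset.mem_powerset] at h
    obtain ⟨hq, ht⟩ := h
    have hrest : (s \ t) \ (q \ t) = s \ q := by grind
    have hleft : ∏ i ∈ q, ∏ j ∈ s \ q, w i j =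
        (∏ i ∈ q \ t, ∏ j ∈ s \ q, w i j) * ∏ i ∈ t, ∏ j ∈ s \ q, w i j :=
      (Finset.prod_sdiff ht).symm
    have hright : ∏ i ∈ t, ∏ j ∈ s \ t, w i j =
        (∏ i ∈ t, ∏ j ∈ s \ q, w i j) * ∏ i ∈ t, ∏ j ∈ q \ t, w i j := by
      rw [← Finset.prod_mul_distrib]
      refine Finset.prod_congr rfl fun i _ => ?_
      rw [← hrest, Finset.prod_sdiff (Finset.sdiff_subset_sdiff hq le_rfl)]
    simp only [hrest, hleft, hright]
    ring

lemma twistedConv_map {α : Type*} [DecidableEq α] (e : α ↪ κ) (F G : Finset κ → R)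
    (s : Finset α) :
    (F ⋆ G) (s.map e) =
      twistedConv (fun i j => w (e i) (e j)) (fun t => F (t.map e)) (fun t => G (t.map e)) s := by
  have hpowerset : (s.map e).powerset = s.powerset.map (Finset.mapEmbedding e).toEmbedding := by
    ext t
    simp [Finset.subset_map_iff, eq_comm]
  simp [twistedConv, hpowerset, ← Finset.map_sdiff]

lemma twistedConv_univ [Fintype κ] (F G : Finset κ → R) :
    (F ⋆ G) Finset.univ = ∑ s, (∏ i ∈ sᶜ, ∏ j ∈ s, w i j) * F sᶜ * G s := by
  rw [twistedConv, Finset.powerset_univ, ← compl_bijective.sum_comp]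
  simp only [← Finset.compl_eq_univ_sdiff, compl_compl]

end CommSemiring

lemma twistedConv_prodFn_cancel [CommRing R] (w : κ → κ → R) (a b d : κ → R)
    (hw : twistedConv w (prodFn 1) (prodFn (-1)) = Pi.single ∅ 1) :
    twistedConv w (prodFn a * twistedConv w (prodFn b) (prodFn (-1)))
      (twistedConv w (prodFn a) (prodFn d)) = twistedConv w (prodFn (a * b)) (prodFn d) := by
  have hcancel : twistedConv w (prodFn (-a)) (prodFn a) = Pi.single ∅ 1 := by
    rw [← prodFn_mul_single_empty (-a), ← hw, prodFn_mul_twistedConv, ← prodFn_mul, ← prodFn_mul,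
      mul_one, neg_mul_neg, mul_one]
  rw [prodFn_mul_twistedConv, ← prodFn_mul, ← prodFn_mul, mul_neg_one, twistedConv_assoc,
    ← twistedConv_assoc w (prodFn (-a)), hcancel, single_empty_twistedConv]

end TwistedConvolution

lemma det_add_diagonal_eq_sum {R κ : Type*} [CommRing R] [Fintype κ] [DecidableEq κ]
    (A : Matrix κ κ R) (d : κ → R) :
    (A + Matrix.diagonal d).det =
      ∑ s : Finset κ, (A.submatrix (Subtype.val : s → κ) Subtype.val).det * ∏ i ∈ sᶜ, d i := by
  refine (Matrix.detRowAlternating.map_add_univ A (Matrix.diagonal d)).trans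
    (Finset.sum_congr rfl fun s _ => ?_)
  have hrows : s.piecewise A (Matrix.diagonal d) =
      fun i => (if i ∈ s then 1 else d i) • s.piecewise A (1 : Matrix κ κ R) i := by
    ext i j
    by_cases hi : i ∈ s <;> simp [Finset.piecewise, hi, Matrix.diagonal_apply, Matrix.one_apply]
  have hscale : ∏ i, (if i ∈ s then 1 else d i) = ∏ i ∈ sᶜ, d i := by
    simp [Finset.prod_ite, Finset.filter_notMem_eq_sdiff, Finset.compl_eq_univ_sdiff]
  rw [hrows, AlternatingMap.map_smul_univ, hscale, smul_eq_mul, mul_comm]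
  exact congrArg (· * _) (Matrix.det_piecewise_one_eq_submatrix_det A s)

lemma det_eq_det_of_apply_zero_zero_eq_one {R : Type*} [CommRing R] {n : ℕ}
    {M : Matrix (Fin (n + 1)) (Fin (n + 1)) R} (hM : M 0 0 = 1) :
    M.det = (Matrix.of fun j k : Fin n => M j.succ k.succ - M j.succ 0 * M 0 k.succ).det := by
  let e : Fin n ⊕ Unit ≃ Fin (n + 1) :=
    (Equiv.optionEquivSumPUnit _).symm.trans (finSuccEquiv n).symm
  have hblocks : M.submatrix e e = Matrix.fromBlocks (Matrix.of fun j k : Fin n => M j.succ k.succ)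
      (Matrix.of fun j _ => M j.succ 0) (Matrix.of fun _ k => M 0 k.succ) 1 := by
    ext (i | i) (j | j) <;> simp [e, hM]
  rw [← Matrix.det_submatrix_equiv_self e, hblocks, Matrix.det_fromBlocks_one₂₂]
  congr 1
  ext j k
  simp [Matrix.mul_apply]

lemma fC_neg (c u v : ℂ) : fC (-c) u v = fC c v u := by
  unfold fC
  rw [← neg_div_neg_eq]
  congr 1 <;> ring

lemma fC_add_right (c u v : ℂ) : fC c u (v + c) = (fC c v u)⁻¹ := by
  unfold fC
  rw [inv_div, ← neg_div_neg_eq]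
  congr 1 <;> ring

lemma fC_add_add (c u v a : ℂ) : fC c (u + a) (v + a) = fC c u v := by
  simp [fC]

lemma fC_ne_zero {c u v : ℂ} (huv : u ≠ v) (h : u - v + c ≠ 0) : fC c u v ≠ 0 :=
  div_ne_zero h (sub_ne_zero.2 huv)

lemma hC_self {c : ℂ} (hc : c ≠ 0) (u : ℂ) : hC c u u = 1 := by
  simp [hC, hc]


-- One step of Gaussian elimination, with the entry `1 / h(t, t) = 1` as pivot.
lemma inv_hC_sub_inv_hC_mul_inv_hC {c t u v : ℂ} (hc : c ≠ 0) (huv : u - v + c ≠ 0)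
    (hut : u - t + c ≠ 0) (htv : t - v + c ≠ 0) :
    (hC c u v)⁻¹ - (hC c u t)⁻¹ * (hC c t v)⁻¹ = (fC c u t)⁻¹ * (hC c u v)⁻¹ * (fC c t v)⁻¹ := by
  simp only [hC, fC, inv_div]
  field_simp
  ring

section Izergin

variable {c : ℂ}

lemma det_inv_hC_fin {n : ℕ} (y : Fin n → ℂ) (hy : ∀ i j, y i - y j + c ≠ 0) :
    (Matrix.of fun j k => (hC c (y j) (y k))⁻¹).det =
      ∏ j, ∏ k ∈ Finset.univ.erase j, (fC c (y j) (y k))⁻¹ := by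
  induction n with
  | zero => simp
  | succ n ih =>
    have hc : c ≠ 0 := by simpa using hy 0 0
    have hschur : (Matrix.of fun j k : Fin n => (hC c (y j.succ) (y k.succ))⁻¹ -
          (hC c (y j.succ) (y 0))⁻¹ * (hC c (y 0) (y k.succ))⁻¹) =
        Matrix.diagonal (fun j => (fC c (y j.succ) (y 0))⁻¹) *
          (Matrix.of fun j k : Fin n => (hC c (y j.succ) (y k.succ))⁻¹) *
          Matrix.diagonal (fun k => (fC c (y 0) (y k.succ))⁻¹) := by
      ext j k
      simpa using inv_hC_sub_inv_hC_mul_inv_hC hc (hy j.succ k.succ) (hy j.succ 0) (hy 0 k.succ)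
    rw [det_eq_det_of_apply_zero_zero_eq_one (by simp [hC_self hc])]
    simp only [Matrix.of_apply]
    rw [hschur, Matrix.det_mul, Matrix.det_mul, Matrix.det_diagonal, Matrix.det_diagonal,
      ih (fun j => y j.succ) fun i j => hy i.succ j.succ]
    simp only [← Finset.filter_ne', Finset.prod_filter, Fin.prod_univ_succ,
      Finset.prod_mul_distrib, ne_eq, Fin.succ_ne_zero, (Fin.succ_ne_zero _).symm, Fin.succ_inj,
      not_true_eq_false, not_false_eq_true, if_true, if_false, one_mul]
    ring

variable {κ : Type*} [DecidableEq κ]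

lemma det_inv_hC [Fintype κ] (y : κ → ℂ) (hy : ∀ i j, y i - y j + c ≠ 0) :
    (Matrix.of fun j k => (hC c (y j) (y k))⁻¹).det =
      ∏ j, ∏ k ∈ Finset.univ.erase j, (fC c (y j) (y k))⁻¹ := by
  let e := (Fintype.equivFin κ).symm
  rw [← Matrix.det_submatrix_equiv_self e]
  refine (det_inv_hC_fin (fun j => y (e j)) fun i j => hy _ _).trans ?_
  rw [← e.prod_comp]
  refine Finset.prod_congr rfl fun j _ => ?_
  simp only [← Finset.filter_ne', Finset.prod_filter]
  simp [← e.prod_comp]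

lemma prod_erase_mul_prod_subtype_erase_inv {R : Type*} [Field R] [Fintype κ] {s : Finset κ}
    (j : s) {g : κ → R} (hg : ∀ k ≠ (j : κ), g k ≠ 0) :
    (∏ k ∈ Finset.univ.erase (j : κ), g k) * ∏ k ∈ Finset.univ.erase j, (g k)⁻¹ =
      ∏ k ∈ sᶜ, g k := by
  have hsub : s.erase j ⊆ Finset.univ.erase (j : κ) := Finset.erase_subset_erase _ s.subset_univ
  have hcompl : Finset.univ.erase (j : κ) \ s.erase j = sᶜ := by
    have := j.2
    ext k
    simp only [Finset.mem_sdiff, Finset.mem_erase, Finset.mem_univ, Finset.mem_compl]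
    grind
  have hinner : ∏ k ∈ Finset.univ.erase j, (g k)⁻¹ = (∏ k ∈ s.erase j, g k)⁻¹ := by
    have hmap : (Finset.univ.erase j).map (Function.Embedding.subtype (· ∈ s)) = s.erase j := by
      rw [Finset.map_erase]
      exact congrArg (·.erase (j : κ)) s.attach_map_val
    rw [← hmap, Finset.prod_map, Finset.prod_inv_distrib]
    rfl
  have hne : ∏ k ∈ s.erase j, g k ≠ 0 :=
    Finset.prod_ne_zero_iff.2 fun k hk => hg k (Finset.ne_of_mem_erase hk)
  rw [hinner, ← Finset.prod_sdiff hsub, hcompl, mul_inv_cancel_right₀ hne]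

variable {y : κ → ℂ}

lemma det_submatrix_mul_prod_div_hC [Fintype κ] (hinj : Function.Injective y)
    (hy : ∀ i j, y i - y j + c ≠ 0) (a : κ → ℂ) (s : Finset κ) :
    ((Matrix.of fun j k => a j * (∏ i ∈ Finset.univ.erase j, fC c (y j) (y i)) /
        hC c (y j) (y k)).submatrix (Subtype.val : s → κ) Subtype.val).det =
      (∏ j ∈ s, ∏ i ∈ sᶜ, fC c (y j) (y i)) * ∏ j ∈ s, a j := by
  have hfactor : (Matrix.of fun j k => a j * (∏ i ∈ Finset.univ.erase j, fC c (y j) (y i)) /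
        hC c (y j) (y k)).submatrix (Subtype.val : s → κ) Subtype.val =
      Matrix.diagonal (fun j : s => a j * ∏ i ∈ Finset.univ.erase (j : κ), fC c (y j) (y i)) *
        Matrix.of fun j k : s => (hC c (y j) (y k))⁻¹ := by
    ext j k
    simp [Matrix.diagonal_mul, div_eq_mul_inv]
  rw [hfactor, Matrix.det_mul, Matrix.det_diagonal,
    det_inv_hC (fun j : s => y j) fun i j => hy i j, ← Finset.prod_mul_distrib,
    ← Finset.prod_mul_distrib, ← Finset.prod_coe_sort s]
  refine Finset.prod_congr rfl fun j _ => ?_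
  rw [mul_assoc, prod_erase_mul_prod_subtype_erase_inv j fun k hk =>
    fC_ne_zero (hinj.ne hk.symm) (hy j k), mul_comm]

lemma KIz_eq_twistedConv_univ [Fintype κ] {ι : Type*} [Fintype ι] (hinj : Function.Injective y)
    (hy : ∀ i j, y i - y j + c ≠ 0) (z : ℂ) (x : ι → ℂ) :
    KIz c z x y = twistedConv (fun i j => fC c (y i) (y j))
      (prodFn fun j => ∏ i, fC c (x i) (y j)) (prodFn fun _ => -z) Finset.univ := by
  have hmatrix : KIz c z x y = ((Matrix.of fun j k => (∏ i, fC c (x i) (y j)) *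
      (∏ i ∈ Finset.univ.erase j, fC c (y j) (y i)) / hC c (y j) (y k)) +
        Matrix.diagonal fun _ => -z).det := by
    rw [KIz]
    congr 1
    ext j k
    simp [Matrix.diagonal_apply, add_comm]
  rw [hmatrix, det_add_diagonal_eq_sum, twistedConv, Finset.powerset_univ]
  refine Finset.sum_congr rfl fun s _ => ?_
  rw [det_submatrix_mul_prod_div_hC hinj hy fun j => ∏ i, fC c (x i) (y j),
    Finset.compl_eq_univ_sdiff, prodFn, prodFn]

lemma KIz_subtype_eq_twistedConv {ι : Type*} [Fintype ι] (hinj : Function.Injective y)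
    (hy : ∀ i j, y i - y j + c ≠ 0) (z : ℂ) (x : ι → ℂ) (s : Finset κ) :
    KIz c z x (fun i : s => y i) = twistedConv (fun i j => fC c (y i) (y j))
      (prodFn fun j => ∏ i, fC c (x i) (y j)) (prodFn fun _ => -z) s := by
  have hs : s = Finset.univ.map (Function.Embedding.subtype (· ∈ s)) := s.attach_map_val.symm
  have hinj' : Function.Injective fun i : s => y i := hinj.comp Subtype.val_injective
  rw [KIz_eq_twistedConv_univ hinj' fun i j => hy i j]
  conv_rhs => rw [hs, twistedConv_map]
  simp only [prodFn, Finset.prod_map]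
  rfl

lemma prod_fC_div_hC [Fintype κ] (hy : ∀ i j, y i - y j + c ≠ 0) (j k : κ) :
    (∏ i ∈ Finset.univ.erase j, fC c (y j) (y i)) / hC c (y j) (y k) =
      (∏ i ∈ Finset.univ.erase k, (y j - y i + c)) / ∏ i ∈ Finset.univ.erase j, (y j - y i) := by
  have hmem (i : κ) : i ∈ Finset.univ := Finset.mem_univ i
  have hfull : (∏ i ∈ Finset.univ.erase j, (y j - y i + c)) * c =
      (∏ i ∈ Finset.univ.erase k, (y j - y i + c)) * (y j - y k + c) := by
    rw [Finset.prod_erase_mul _ _ (hmem k), ← Finset.prod_erase_mul _ _ (hmem j), sub_self,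
      zero_add]
  simp only [fC, hC, Finset.prod_div_distrib]
  rw [div_div_eq_mul_div, div_mul_eq_mul_div, hfull, div_right_comm,
    mul_div_cancel_right₀ _ (hy j k)]

-- Lagrange interpolation at the nodes `y` of the monic polynomial `∏ i ≠ k, (X - (y i - c))`, whose
-- degree is one less than the number of nodes.
lemma sum_prod_fC_div_hC [Fintype κ] (hinj : Function.Injective y)
    (hy : ∀ i j, y i - y j + c ≠ 0) (k : κ) :
    ∑ j, (∏ i ∈ Finset.univ.erase j, fC c (y j) (y i)) / hC c (y j) (y k) = 1 := by
  let p : Polynomial ℂ :=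
    ∏ i ∈ Finset.univ.erase k, (Polynomial.X - Polynomial.C (y i - c))
  have hmonic : p.Monic := Polynomial.monic_prod_X_sub_C _ _
  have hdegree : (Finset.univ : Finset κ).card = p.degree + 1 := by
    rw [Polynomial.degree_eq_natDegree hmonic.ne_zero,
      Polynomial.natDegree_finsetProd_X_sub_C_eq_card]
    exact_mod_cast (Finset.card_erase_add_one (Finset.mem_univ k)).symm
  have heval (j : κ) : p.eval (y j) = ∏ i ∈ Finset.univ.erase k, (y j - y i + c) := by
    simp [p, Polynomial.eval_prod, sub_add]
  simp only [prod_fC_div_hC hy, ← heval]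
  rw [← Lagrange.leadingCoeff_eq_sum hinj.injOn hdegree, hmonic.leadingCoeff]

lemma KIz_one_of_isEmpty [Fintype κ] [Nonempty κ] {ι : Type*} [Fintype ι] [IsEmpty ι]
    (hinj : Function.Injective y) (hy : ∀ i j, y i - y j + c ≠ 0) (x : ι → ℂ) :
    KIz c 1 x y = 0 := by
  refine Matrix.exists_vecMul_eq_zero_iff.1 ⟨1, one_ne_zero, ?_⟩
  ext k
  simp [Matrix.vecMul, dotProduct, Finset.sum_add_distrib, sum_prod_fC_div_hC hinj hy]

lemma twistedConv_prodFn_one_prodFn_neg_one (hinj : Function.Injective y)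
    (hy : ∀ i j, y i - y j + c ≠ 0) :
    twistedConv (fun i j => fC c (y i) (y j)) (prodFn 1) (prodFn (-1)) = Pi.single ∅ 1 := by
  ext s
  have hK : twistedConv (fun i j => fC c (y i) (y j)) (prodFn 1) (prodFn (-1)) s =
      KIz c 1 Empty.elim (fun i : s => y i) := by
    rw [KIz_subtype_eq_twistedConv hinj hy]
    rfl
  rcases s.eq_empty_or_nonempty with rfl | hs
  · simp [hK, KIz]
  · have := hs.to_subtype
    have hinj' : Function.Injective fun i : s => y i := hinj.comp Subtype.val_injective
    rw [hK, KIz_one_of_isEmpty hinj' fun i j => hy i j, Pi.single_eq_of_ne hs.ne_empty]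

theorem sum_KIz_mul_KIz [Fintype κ] {ι₁ ι₂ : Type*} [Fintype ι₁] [Fintype ι₂] {ξ : κ → ℂ}
    (hinj : Function.Injective ξ) (hξ : ∀ i j, ξ i - ξ j + c ≠ 0) (z : ℂ) (u : ι₁ → ℂ)
    (v : ι₂ → ℂ) :
    ∑ s : Finset κ,
        KIz c z u (fun i : s => ξ i + c) * KIz c 1 v (fun i : ↥sᶜ => ξ i + c) *
          (∏ i ∈ sᶜ, ∏ j ∈ s, fC c (ξ i) (ξ j)) / (∏ j ∈ sᶜ, ∏ i, fC c (ξ j) (u i)) =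
      KIz c z (Sum.elim u v) (fun i => ξ i + c) := by
  let w i j := fC c (ξ i + c) (ξ j + c)
  let a j := ∏ i, fC c (u i) (ξ j + c)
  let b j := ∏ i, fC c (v i) (ξ j + c)
  have hinj' : Function.Injective fun i => ξ i + c := (add_left_injective c).comp hinj
  have hξ' : ∀ i j, (ξ i + c) - (ξ j + c) + c ≠ 0 := by simpa using hξ
  have hKu (s : Finset κ) : KIz c z u (fun i : s => ξ i + c) =
      twistedConv w (prodFn a) (prodFn fun _ => -z) s :=
    KIz_subtype_eq_twistedConv hinj' hξ' z u s
  have hKv (s : Finset κ) : KIz c 1 v (fun i : s => ξ i + c) =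
      twistedConv w (prodFn b) (prodFn (-1)) s :=
    KIz_subtype_eq_twistedConv hinj' hξ' 1 v s
  have hKuv : KIz c z (Sum.elim u v) (fun i => ξ i + c) =
      twistedConv w (prodFn (a * b)) (prodFn fun _ => -z) Finset.univ := by
    simp [KIz_eq_twistedConv_univ hinj' hξ', w, a, b, Pi.mul_def]
  have hunit := twistedConv_prodFn_one_prodFn_neg_one hinj' hξ'
  rw [hKuv, ← twistedConv_prodFn_cancel w a b _ hunit, twistedConv_univ]
  refine Finset.sum_congr rfl fun s _ => ?_
  have hw (i j : κ) : w i j = fC c (ξ i) (ξ j) := fC_add_add ..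
  have ha : (∏ j ∈ sᶜ, ∏ i, fC c (ξ j) (u i))⁻¹ = prodFn a sᶜ := by
    simp [prodFn, a, fC_add_right]
  simp only [hKu, hKv, hw, div_eq_mul_inv, ha, Pi.mul_apply]
  ring

end Izergin

lemma KIz_append (c z : ℂ) {n m : ℕ} {κ : Type*} [Fintype κ] [DecidableEq κ] (u : Fin n → ℂ)
    (v : Fin m → ℂ) (y : κ → ℂ) : KIz c z (Fin.append u v) y = KIz c z (Sum.elim u v) y := by
  simp [KIz, Fin.prod_univ_add]

namespace Generic

variable {c : ℂ} {ι : Type*} {w : ι → ℂ}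

lemma comp {κ : Type*} (hw : Generic c w) {e : κ → ι} (he : Function.Injective e) :
    Generic c (w ∘ e) :=
  fun _ _ hij => hw _ _ (he.ne hij)

lemma neg (hw : Generic c w) : Generic (-c) w := by
  intro i j hij
  obtain ⟨h0, h1, h2, h3, h4⟩ := hw i j hij
  exact ⟨h0, h2, by rwa [neg_neg], by rwa [mul_neg, ← neg_mul], by rwa [neg_mul_neg]⟩

lemma injective (hw : Generic c w) : Function.Injective w := fun i j hij => by
  by_contra hne
  exact (hw i j hne).1 (sub_eq_zero.2 hij)

lemma sub_add_ne_zero (hw : Generic c w) (hc : c ≠ 0) (i j : ι) : w i - w j + c ≠ 0 := by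
  rcases eq_or_ne i j with rfl | hij
  · simpa using hc
  · exact fun h => (hw i j hij).2.2.1 (eq_neg_of_add_eq_zero_left h)

end Generic

theorem stmt17_general
    (c z : ℂ) (hc : c ≠ 0) (l n m : ℕ)
    (ξ : Fin l → ℂ) (u : Fin n → ℂ) (v : Fin m → ℂ)
    (hgen : Generic c (Fin.append (Fin.append u v) ξ)) :
    (∑ s : Finset (Fin l),
        KIz c z u (fun i => restr ξ s i + c) * KIz c 1 v (fun i => restr ξ sᶜ i + c) *
          (∏ i ∈ sᶜ, ∏ j ∈ s, fC c (ξ i) (ξ j)) /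
          (∏ j ∈ sᶜ, ∏ i, fC c (ξ j) (u i)))
        = KIz c z (Fin.append u v) (fun i => ξ i + c) ∧
      (∑ s : Finset (Fin l),
        KIzBar c z u (fun i => restr ξ s i - c) *
            KIzBar c 1 v (fun i => restr ξ sᶜ i - c) *
          (∏ i ∈ s, ∏ j ∈ sᶜ, fC c (ξ i) (ξ j)) /
          (∏ i, ∏ j ∈ sᶜ, fC c (u i) (ξ j)))
        = KIzBar c z (Fin.append u v) (fun i => ξ i - c) := by
  have hξ : Generic c ξ := by
    simpa [Function.comp_def] using hgen.comp (Fin.natAdd_injective l (n + m))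
  refine ⟨?_, ?_⟩
  · rw [KIz_append]
    exact sum_KIz_mul_KIz hξ.injective (hξ.sub_add_ne_zero hc) z u v
  · have hsum := sum_KIz_mul_KIz hξ.injective (hξ.neg.sub_add_ne_zero (neg_ne_zero.2 hc)) z u v
    simp only [← KIz_append, ← sub_eq_add_neg, fC_neg] at hsum
    simp only [KIzBar, ← hsum, restr]
    refine Finset.sum_congr rfl fun s _ => ?_
    rw [Finset.prod_comm (s := s), Finset.prod_comm (s := Finset.univ)]

/-- Summation formula for shifted modified Izergin determinants at `z = 1`. -/
theorem stmt17
    (c : ℂ) (hc : c ≠ 0) (l n m : ℕ)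
    (ξ : Fin l → ℂ) (u : Fin n → ℂ) (v : Fin m → ℂ)
    (hgen : Generic c (Fin.append (Fin.append u v) ξ)) :
    (∑ s : Finset (Fin l),
        KIz c 1 u (fun i => restr ξ s i + c) * KIz c 1 v (fun i => restr ξ sᶜ i + c) *
          (∏ i ∈ sᶜ, ∏ j ∈ s, fC c (ξ i) (ξ j)) /
          (∏ j ∈ sᶜ, ∏ i, fC c (ξ j) (u i)))
        = KIz c 1 (Fin.append u v) (fun i => ξ i + c) ∧
      (∑ s : Finset (Fin l),
        KIzBar c 1 u (fun i => restr ξ s i - c) *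
            KIzBar c 1 v (fun i => restr ξ sᶜ i - c) *
          (∏ i ∈ s, ∏ j ∈ sᶜ, fC c (ξ i) (ξ j)) /
          (∏ i, ∏ j ∈ sᶜ, fC c (u i) (ξ j)))
        = KIzBar c 1 (Fin.append u v) (fun i => ξ i - c) :=
  stmt17_general c 1 hc l n m ξ u v hgen
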